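/- Let 𝕜 be an algebraically closed field of characteristic zero and n ≥ 1 an integer. Let Ω, Ω' ∈ 𝕜[x,y,z] be homogeneous polynomials of degree n+3 with isolated singularities and let ξ, ξ' ∈ 𝕜. Let R be a Poisson 𝕜-algebra which is an integral domain such that for every r ∈ R∖𝕜·1 there exists a nonpositive (n−1)-valuation ν on R with ν(r) < 0. Then every injective Poisson 𝕜-algebra morphism f : P_{Ω−ξ} → P_{Ω'−ξ'} ⊗_𝕜 R satisfies im(f) = P_{Ω'−ξ'} ⊗ 𝕜·1. -/

import Mathlib

open scoped TensorProduct

/-- A Poisson bracket on a commutative algebra `A` over `𝕜`: a bilinear, antisymmetric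
bracket satisfying the Jacobi identity and the Leibniz rule. -/
structure PoissonStructure (𝕜 A : Type*) [CommRing 𝕜] [CommRing A] [Algebra 𝕜 A] where
  bracket : A → A → A
  add_left : ∀ a b c : A, bracket (a + b) c = bracket a c + bracket b c
  smul_left : ∀ (r : 𝕜) (a b : A), bracket (r • a) b = r • bracket a b
  antisymm : ∀ a b : A, bracket a b = - bracket b a
  jacobi : ∀ a b c : A,
    bracket a (bracket b c) + bracket b (bracket c a) + bracket c (bracket a b) = 0
  leibniz : ∀ a b c : A, bracket a (b * c) = bracket a b * c + b * bracket a c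

/-- `f` is a morphism of Poisson algebras. -/
def IsPoissonHom {𝕜 A B : Type*} [CommRing 𝕜] [CommRing A] [CommRing B]
    [Algebra 𝕜 A] [Algebra 𝕜 B]
    (PA : PoissonStructure 𝕜 A) (PB : PoissonStructure 𝕜 B) (f : A →ₐ[𝕜] B) : Prop :=
  ∀ a b : A, f (PA.bracket a b) = PB.bracket (f a) (f b)

/-- A Poisson algebra is Dixmier if every injective Poisson endomorphism is bijective. -/
def IsDixmier (𝕜 A : Type*) [CommRing 𝕜] [CommRing A] [Algebra 𝕜 A]
    (PA : PoissonStructure 𝕜 A) : Prop :=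
  ∀ f : A →ₐ[𝕜] A, IsPoissonHom PA PA f → Function.Injective f → Function.Bijective f

/-- The tensor-product Poisson bracket on `A ⊗[𝕜] B`. -/
def IsTensorBracket {𝕜 A B : Type*} [CommRing 𝕜] [CommRing A] [CommRing B]
    [Algebra 𝕜 A] [Algebra 𝕜 B] (PA : PoissonStructure 𝕜 A) (PB : PoissonStructure 𝕜 B)
    (PT : PoissonStructure 𝕜 (A ⊗[𝕜] B)) : Prop :=
  ∀ (a a' : A) (b b' : B),
    PT.bracket (a ⊗ₜ[𝕜] b) (a' ⊗ₜ[𝕜] b') =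
      PA.bracket a a' ⊗ₜ[𝕜] (b * b') + (a * a') ⊗ₜ[𝕜] PB.bracket b b'

/-- `A` is `R`-Dixmier: every injective Poisson morphism `A → A ⊗ R` has image `A ⊗ 𝕜·1`. -/
def IsRelDixmier (𝕜 A R : Type*) [CommRing 𝕜] [CommRing A] [CommRing R]
    [Algebra 𝕜 A] [Algebra 𝕜 R] (PA : PoissonStructure 𝕜 A)
    (PT : PoissonStructure 𝕜 (A ⊗[𝕜] R)) : Prop :=
  ∀ f : A →ₐ[𝕜] A ⊗[𝕜] R, IsPoissonHom PA PT f → Function.Injective f →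
    Set.range f = Set.range fun a : A => a ⊗ₜ[𝕜] (1 : R)

/-- A Poisson algebra is Poisson simple if its only Poisson ideals are `0` and the whole ring. -/
def IsPoissonSimple {𝕜 A : Type*} [CommRing 𝕜] [CommRing A] [Algebra 𝕜 A]
    (PA : PoissonStructure 𝕜 A) : Prop :=
  ∀ I : Ideal A, (∀ x : A, ∀ y ∈ I, PA.bracket x y ∈ I) → I = ⊥ ∨ I = ⊤

open MvPolynomial in
/-- The Jacobian Poisson bracket with potential `Ω` on `𝕜[x,y,z]`. -/
noncomputable def jacBracket {𝕜 : Type*} [CommRing 𝕜]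
    (Ω f g : MvPolynomial (Fin 3) 𝕜) : MvPolynomial (Fin 3) 𝕜 :=
  Matrix.det (Matrix.of
    ![![pderiv 0 f, pderiv 1 f, pderiv 2 f],
      ![pderiv 0 g, pderiv 1 g, pderiv 2 g],
      ![pderiv 0 Ω, pderiv 1 Ω, pderiv 2 Ω]])

open MvPolynomial in
/-- `Ω` has an isolated singularity at the origin. -/
def HasIsolatedSingularity {𝕜 : Type*} [Field 𝕜] (Ω : MvPolynomial (Fin 3) 𝕜) : Prop :=
  FiniteDimensional 𝕜
    (MvPolynomial (Fin 3) 𝕜 ⧸ Ideal.span {pderiv (0 : Fin 3) Ω, pderiv 1 Ω, pderiv 2 Ω})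

/-- The underlying commutative algebra of `P_{Ω-ξ} = 𝕜[x,y,z]/(Ω-ξ)`. -/
def PQuot (𝕜 : Type*) [CommRing 𝕜] (Ω : MvPolynomial (Fin 3) 𝕜) (ξ : 𝕜) : Type _ :=
  MvPolynomial (Fin 3) 𝕜 ⧸ Ideal.span {Ω - MvPolynomial.C ξ}

noncomputable instance {𝕜 : Type*} [CommRing 𝕜] (Ω : MvPolynomial (Fin 3) 𝕜) (ξ : 𝕜) :
    CommRing (PQuot 𝕜 Ω ξ) :=
  inferInstanceAs (CommRing (MvPolynomial (Fin 3) 𝕜 ⧸ Ideal.span {Ω - MvPolynomial.C ξ}))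

noncomputable instance {𝕜 : Type*} [CommRing 𝕜] (Ω : MvPolynomial (Fin 3) 𝕜) (ξ : 𝕜) :
    Algebra 𝕜 (PQuot 𝕜 Ω ξ) :=
  inferInstanceAs (Algebra 𝕜 (MvPolynomial (Fin 3) 𝕜 ⧸ Ideal.span {Ω - MvPolynomial.C ξ}))

/-- The canonical (surjective) projection `𝕜[x,y,z] → P_{Ω-ξ}`. -/
noncomputable def PQuot.mk {𝕜 : Type*} [CommRing 𝕜] (Ω : MvPolynomial (Fin 3) 𝕜) (ξ : 𝕜)
    (f : MvPolynomial (Fin 3) 𝕜) : PQuot 𝕜 Ω ξ :=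
  Ideal.Quotient.mk (Ideal.span {Ω - MvPolynomial.C ξ}) f

/-- `P` is the Poisson bracket on `P_{Ω-ξ}` induced from the Jacobian bracket on `A_Ω`. -/
def IsInducedBracket {𝕜 : Type*} [CommRing 𝕜] (Ω : MvPolynomial (Fin 3) 𝕜) (ξ : 𝕜)
    (P : PoissonStructure 𝕜 (PQuot 𝕜 Ω ξ)) : Prop :=
  ∀ f g : MvPolynomial (Fin 3) 𝕜,
    P.bracket (PQuot.mk Ω ξ f) (PQuot.mk Ω ξ g) = PQuot.mk Ω ξ (jacBracket Ω f g)

open PiTensorProduct in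
/-- The Poisson bracket on a finite tensor product `⨂[𝕜] i, A i`. -/
def IsPiTensorBracket {𝕜 : Type*} [CommRing 𝕜] {d : ℕ} {A : Fin d → Type*}
    [∀ i, CommRing (A i)] [∀ i, Algebra 𝕜 (A i)]
    (P : ∀ i, PoissonStructure 𝕜 (A i))
    (PT : PoissonStructure 𝕜 (⨂[𝕜] i, A i)) : Prop :=
  ∀ a b : (i : Fin d) → A i,
    PT.bracket (⨂ₜ[𝕜] i, a i) (⨂ₜ[𝕜] i, b i) =
      ∑ i : Fin d,
        ⨂ₜ[𝕜] j, Function.update (fun j => a j * b j) i ((P i).bracket (a i) (b i)) j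

/-- The Poisson-torus bracket associated to a matrix `Λ` on the Laurent polynomial ring
`𝕜[x₁^{±1},…,xₙ^{±1}]`, realized as the group algebra of `ℤⁿ`:
`{x^u, x^v} = (Σ_{i,j} uᵢ λᵢⱼ vⱼ) x^{u+v}`. -/
def IsTorusBracket {𝕜 : Type*} [CommRing 𝕜] (n : ℕ) (Λ : Matrix (Fin n) (Fin n) 𝕜)
    (P : PoissonStructure 𝕜 (AddMonoidAlgebra 𝕜 (Fin n → ℤ))) : Prop :=
  ∀ u v : Fin n → ℤ,
    P.bracket (AddMonoidAlgebra.single u (1 : 𝕜)) (AddMonoidAlgebra.single v (1 : 𝕜)) =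
      (∑ i, ∑ j, (u i : 𝕜) * Λ i j * (v j : 𝕜)) • AddMonoidAlgebra.single (u + v) (1 : 𝕜)

/-- `ν : A → ℤ ∪ {∞}` is a `w`-valuation on the Poisson algebra `A`. -/
structure IsWValuation {𝕜 A : Type*} [CommRing 𝕜] [CommRing A] [Algebra 𝕜 A]
    (P : PoissonStructure 𝕜 A) (w : ℤ) (ν : A → WithTop ℤ) : Prop where
  eq_top_iff : ∀ a : A, ν a = ⊤ ↔ a = 0
  scalar : ∀ c : 𝕜, c ≠ 0 → ν (algebraMap 𝕜 A c) = 0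
  map_mul : ∀ a b : A, ν (a * b) = ν a + ν b
  map_add : ∀ a b : A, min (ν a) (ν b) ≤ ν (a + b)
  map_bracket : ∀ a b : A, ν a + ν b ≤ ν (P.bracket a b) + (w : WithTop ℤ)

namespace RelDix

open MvPolynomial

theorem hc_mul {𝕜 : Type*} [Field 𝕜] {Q : MvPolynomial (Fin 3) 𝕜} {d : ℕ}
    (hQ : Q.IsHomogeneous d) (e : ℕ) (G : MvPolynomial (Fin 3) 𝕜) :
    homogeneousComponent (e + d) (G * Q) = homogeneousComponent e G * Q := by
  induction G using MvPolynomial.induction_on' with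
  | monomial s c =>
    have h1 : (monomial s c : MvPolynomial (Fin 3) 𝕜).IsHomogeneous s.degree :=
      isHomogeneous_monomial c rfl
    rw [homogeneousComponent_of_mem (h1.mul hQ), homogeneousComponent_of_mem h1]
    by_cases h : e = s.degree
    · simp [h]
    · rw [if_neg h, if_neg (by omega), zero_mul]
  | add p q hp hq => simp only [add_mul, map_add, hp, hq]

/-- A homogeneous expression of a power of each variable in terms of the partials. -/
theorem exists_pow {𝕜 : Type*} [Field 𝕜] {Ω : MvPolynomial (Fin 3) 𝕜} {n : ℕ}
    (hhom : Ω.IsHomogeneous (n + 3)) (hiso : HasIsolatedSingularity Ω) (i : Fin 3) :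
    ∃ (e : ℕ) (g : Fin 3 → MvPolynomial (Fin 3) 𝕜), (∀ k, (g k).IsHomogeneous e) ∧
      (X i : MvPolynomial (Fin 3) 𝕜) ^ (e + (n + 2)) = ∑ k, g k * pderiv k Ω := by
  unfold HasIsolatedSingularity at hiso
  set I := Ideal.span {pderiv (0 : Fin 3) Ω, pderiv 1 Ω, pderiv 2 Ω} with hI
  have hint : IsIntegral 𝕜 (Ideal.Quotient.mk I (X i)) := IsIntegral.of_finite 𝕜 _
  obtain ⟨q, hq, hq0⟩ := hint
  set e := q.natDegree with he
  have hmem : Polynomial.aeval (X i : MvPolynomial (Fin 3) 𝕜) q ∈ I := by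
    rw [← Ideal.Quotient.eq_zero_iff_mem]
    have h := Polynomial.aeval_algHom_apply (Ideal.Quotient.mkₐ 𝕜 I) (X i) q
    simp only [Ideal.Quotient.mkₐ_eq_mk] at h
    rw [← h]
    exact hq0
  obtain ⟨a, b, hab⟩ := Ideal.mem_span_insert.mp hmem
  obtain ⟨hb, hab⟩ := hab
  obtain ⟨c, d, rfl⟩ := Ideal.mem_span_pair.mp hb
  have hpd : ∀ k, (pderiv k Ω).IsHomogeneous (n + 2) := fun k => hhom.pderiv
  refine ⟨e, ![homogeneousComponent e (X i ^ (n+2) * a), homogeneousComponent e (X i ^ (n+2) * c),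
    homogeneousComponent e (X i ^ (n+2) * d)], ?_, ?_⟩
  · intro k
    fin_cases k <;> exact homogeneousComponent_isHomogeneous _ _
  · have h2 := congrArg (fun p => homogeneousComponent (e + (n+2)) (X i ^ (n+2) * p)) hab
    simp only [mul_add, map_add, ← mul_assoc] at h2
    rw [hc_mul (hpd 0), hc_mul (hpd 1), hc_mul (hpd 2)] at h2
    rw [Fin.sum_univ_three]
    simp only [Matrix.cons_val]
    rw [add_assoc, ← h2, mul_comm, hc_mul (isHomogeneous_X_pow i (n+2)), pow_add]
    congr 1
    rw [Polynomial.aeval_eq_sum_range, map_sum, Finset.sum_eq_single e]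
    · rw [show q.coeff e = 1 from hq.coeff_natDegree, one_smul, homogeneousComponent_eq_self (isHomogeneous_X_pow i e)]
    · intro j _ hj
      rw [map_smul, homogeneousComponent_of_mem (isHomogeneous_X_pow i j), if_neg (Ne.symm hj),
        smul_zero]
    · intro h
      exact absurd (Finset.mem_range.mpr (by omega)) h

theorem ne_zero_of_iso {𝕜 : Type*} [Field 𝕜] {Ω : MvPolynomial (Fin 3) 𝕜} {n : ℕ}
    (hhom : Ω.IsHomogeneous (n + 3)) (hiso : HasIsolatedSingularity Ω) : Ω ≠ 0 := by
  rintro rfl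
  obtain ⟨e, g, -, h⟩ := exists_pow hhom hiso 0
  simp at h

theorem isRadical_of_iso {𝕜 : Type*} [Field 𝕜] {Ω : MvPolynomial (Fin 3) 𝕜} {n : ℕ}
    (hhom : Ω.IsHomogeneous (n + 3)) (hiso : HasIsolatedSingularity Ω) : IsRadical Ω := by
  rw [isRadical_iff_squarefree_of_ne_zero (ne_zero_of_iso hhom hiso)]
  rintro p ⟨q, hq⟩
  have hd : ∀ k, p ∣ pderiv k Ω := by
    intro k
    rw [hq, Derivation.leibniz, Derivation.leibniz]
    simp only [smul_eq_mul]
    exact ⟨p * pderiv k q + q * (pderiv k p + pderiv k p), by ring⟩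
  have hX : ∀ i : Fin 3, ∃ N, p ∣ (X i : MvPolynomial (Fin 3) 𝕜) ^ N := by
    intro i
    obtain ⟨e, g, -, h⟩ := exists_pow hhom hiso i
    refine ⟨_, h ▸ Finset.dvd_sum fun k _ => Dvd.dvd.mul_left (hd k) _⟩
  obtain ⟨N, hN⟩ := hX 0
  obtain ⟨M, hM⟩ := hX 1
  have hrel : IsRelPrime (X 0 : MvPolynomial (Fin 3) 𝕜) (X 1) := by
    rw [(MvPolynomial.X_prime (R := 𝕜) (i := (0 : Fin 3))).irreducible.isRelPrime_iff_not_dvd]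
    rw [X_dvd_X]
    decide
  exact (hrel.pow (m := N) (n := M)) hN hM

/-- Polynomials of degree at most `-i`. -/
def W (𝕜 : Type*) [Field 𝕜] (i : ℤ) : Submodule 𝕜 (MvPolynomial (Fin 3) 𝕜) where
  carrier := {p | ∀ s, coeff s p ≠ 0 → (s.degree : ℤ) ≤ -i}
  zero_mem' := by intro s hs; simp at hs
  add_mem' := by
    intro p q hp hq s hs
    rw [coeff_add] at hs
    by_cases h : coeff s p = 0
    · exact hq s (by simpa [h] using hs)
    · exact hp s h
  smul_mem' := by
    intro c p hp s hs
    rw [coeff_smul] at hs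
    exact hp s (right_ne_zero_of_mul hs)

theorem W_anti {𝕜 : Type*} [Field 𝕜] {i j : ℤ} (h : i ≤ j) : W 𝕜 j ≤ W 𝕜 i :=
  fun _ hp s hs => (hp s hs).trans (by omega)

theorem W_mul {𝕜 : Type*} [Field 𝕜] {i j : ℤ} {p q : MvPolynomial (Fin 3) 𝕜}
    (hp : p ∈ W 𝕜 i) (hq : q ∈ W 𝕜 j) : p * q ∈ W 𝕜 (i + j) := by
  intro s hs
  rw [coeff_mul] at hs
  obtain ⟨x, hx, hx0⟩ := Finset.exists_ne_zero_of_sum_ne_zero hs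
  rw [Finset.HasAntidiagonal.mem_antidiagonal] at hx
  have h1 := hp _ (left_ne_zero_of_mul hx0)
  have h2 := hq _ (right_ne_zero_of_mul hx0)
  rw [← hx, map_add]
  push_cast
  omega

theorem W_pderiv {𝕜 : Type*} [Field 𝕜] {i : ℤ} {p : MvPolynomial (Fin 3) 𝕜} (k : Fin 3)
    (hp : p ∈ W 𝕜 i) : pderiv k p ∈ W 𝕜 (i + 1) := by
  intro s hs
  rw [coeff_pderiv] at hs
  have h1 := hp _ (left_ne_zero_of_mul hs)
  rw [map_add, Finsupp.degree_single] at h1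
  push_cast at h1
  omega

theorem W_hom {𝕜 : Type*} [Field 𝕜] {k : ℕ} {p : MvPolynomial (Fin 3) 𝕜} 
    (hp : p.IsHomogeneous k) : p ∈ W 𝕜 (-k) := by
  intro s hs
  by_contra h
  exact hs (hp.coeff_eq_zero (by omega))

theorem W_iff {𝕜 : Type*} [Field 𝕜] {k : ℕ} {p : MvPolynomial (Fin 3) 𝕜} :
    p ∈ W 𝕜 (-k) ↔ p.totalDegree ≤ k := by
  unfold totalDegree
  rw [Finset.sup_le_iff]
  constructor
  · intro h s hs
    have h1 := h s (mem_support_iff.mp hs)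
    have h2 : (s.sum fun _ e => e) = s.degree := rfl
    omega
  · intro h s hs
    have h1 := h s (mem_support_iff.mpr hs)
    have h2 : (s.sum fun _ e => e) = s.degree := rfl
    omega

theorem W_top {𝕜 : Type*} [Field 𝕜] {k : ℕ} {p : MvPolynomial (Fin 3) 𝕜} 
    (hp : p ∈ W 𝕜 (-k)) : p - homogeneousComponent k p ∈ W 𝕜 (-k + 1) := by
  intro s hs
  rw [coeff_sub, coeff_homogeneousComponent] at hs
  by_cases h : s.degree = k
  · simp [h] at hs
  · rw [if_neg h, sub_zero] at hs
    have := hp s hs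
    omega

theorem W_hc {𝕜 : Type*} [Field 𝕜] {k : ℕ} {p : MvPolynomial (Fin 3) 𝕜} 
    (hp : p ∈ W 𝕜 (-k + 1)) : homogeneousComponent k p = 0 := by
  ext s
  rw [coeff_homogeneousComponent, coeff_zero]
  split_ifs with h
  · by_contra h0
    have := hp s h0
    omega
  · rfl

theorem W_pow {𝕜 : Type*} [Field 𝕜] {m : ℤ} {p : MvPolynomial (Fin 3) 𝕜} 
    (hp : p ∈ W 𝕜 m) (N : ℕ) : p ^ N ∈ W 𝕜 (N * m) := by
  induction N with
  | zero => simpa using W_hom (isHomogeneous_one (Fin 3) 𝕜)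
  | succ N ih =>
    rw [pow_succ]
    have := W_mul ih hp
    convert this using 2
    push_cast; ring

theorem W_pow_sub {𝕜 : Type*} [Field 𝕜] {m : ℤ} {p q : MvPolynomial (Fin 3) 𝕜} 
    (hp : p ∈ W 𝕜 m) (hq : q ∈ W 𝕜 m) (hpq : p - q ∈ W 𝕜 (m + 1)) (N : ℕ) :
    p ^ N - q ^ N ∈ W 𝕜 (N * m + 1) := by
  induction N with
  | zero => simp
  | succ N ih =>
    have h : p ^ (N + 1) - q ^ (N + 1) = p ^ N * (p - q) + (p ^ N - q ^ N) * q := by ring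
    rw [h]
    refine add_mem ?_ ?_
    · convert W_mul (W_pow hp N) hpq using 2
      push_cast; ring
    · convert W_mul ih hq using 2
      push_cast; ring

theorem totalDegree_pot {𝕜 : Type*} [Field 𝕜] {Ω : MvPolynomial (Fin 3) 𝕜} {n : ℕ} (ξ : 𝕜)
    (hhom : Ω.IsHomogeneous (n + 3)) (h0 : Ω ≠ 0) : (Ω - C ξ).totalDegree = n + 3 := by
  rw [sub_eq_add_neg, ← C_neg, totalDegree_add_eq_left_of_totalDegree_lt, hhom.totalDegree h0]
  rw [totalDegree_C, hhom.totalDegree h0]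
  omega

/-- Powers are detected in the degree filtration. -/
theorem W_key {𝕜 : Type*} [Field 𝕜] {Ω : MvPolynomial (Fin 3) 𝕜} {n : ℕ}
    (hhom : Ω.IsHomogeneous (n + 3)) (hiso : HasIsolatedSingularity Ω) (ξ : 𝕜)
    (k N : ℕ) (p h G : MvPolynomial (Fin 3) 𝕜) (hp : p ∈ W 𝕜 (-k))
    (hh : h ∈ W 𝕜 (N * (-k) + 1)) (hG : p ^ N - h = G * (Ω - C ξ)) :
    ∃ q, p - q * (Ω - C ξ) ∈ W 𝕜 (-k + 1) := by
  have h0 := ne_zero_of_iso hhom hiso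
  have htd := totalDegree_pot ξ hhom h0
  have hQ0 : Ω - C ξ ≠ 0 := by
    intro h
    rw [h] at htd
    simp at htd
  set t := homogeneousComponent k p with ht
  have htop := W_top hp
  have hthom : t.IsHomogeneous k := homogeneousComponent_isHomogeneous _ _
  have hpw := W_pow_sub hp (W_hom hthom) htop N
  have hdeg : G * (Ω - C ξ) ∈ W 𝕜 (-(k * N : ℕ)) := by
    rw [← hG]
    refine sub_mem ?_ ?_
    · convert W_pow hp N using 1
      push_cast; ring_nf
    · refine W_anti ?_ hh
      push_cast; nlinarith
  have hdvd : Ω ∣ t ^ N := by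
    have h1 : t ^ N = G * (Ω - C ξ) + (h - (p ^ N - t ^ N)) := by rw [← hG]; ring
    have h2 : homogeneousComponent (k * N) (h - (p ^ N - t ^ N)) = 0 := by
      apply W_hc
      convert sub_mem hh hpw using 2
      push_cast; ring
    have h3 := congrArg (homogeneousComponent (k * N)) h1
    rw [homogeneousComponent_eq_self (hthom.pow N), map_add, h2, add_zero] at h3
    by_cases hG0 : G = 0
    · rw [h3, hG0]; simp
    · rw [W_iff, totalDegree_mul_of_isDomain hG0 hQ0, htd] at hdeg
      obtain ⟨e, he⟩ : ∃ e, k * N = e + (n + 3) := ⟨k * N - (n+3), by omega⟩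
      rw [h3, mul_sub, map_sub, mul_comm G (C ξ), homogeneousComponent_C_mul,
        homogeneousComponent_eq_zero (k*N) G (by omega), he, hc_mul hhom, mul_zero, sub_zero]
      exact dvd_mul_left _ _
  have hdvd2 : Ω ∣ t := isRadical_of_iso hhom hiso N t hdvd
  obtain ⟨q, hq⟩ := hdvd2
  refine ⟨q, ?_⟩
  have h1 : p - q * (Ω - C ξ) = (p - t) + ξ • q := by
    rw [smul_eq_C_mul, hq]; ring
  rw [h1]
  refine add_mem htop (Submodule.smul_mem _ _ ?_)
  by_cases hq0 : q = 0
  · rw [hq0]; exact zero_mem _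
  · have h2 := W_iff.mp (W_hom hthom)
    rw [hq, totalDegree_mul_of_isDomain h0 hq0, hhom.totalDegree h0] at h2
    refine W_anti ?_ (W_iff.mpr (le_refl q.totalDegree))
    omega

theorem F_pow {𝕜 B : Type*} [Field 𝕜] [CommRing B] [Algebra 𝕜 B] (F : ℤ → Submodule 𝕜 B)
    (hone : 1 ∈ F 0) (hmul : ∀ i j a b, a ∈ F i → b ∈ F j → a * b ∈ F (i + j))
    {m : ℤ} {a : B} (ha : a ∈ F m) (N : ℕ) : a ^ N ∈ F (N * m) := by
  induction N with
  | zero => simpa using hone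
  | succ N ih =>
    rw [pow_succ]
    convert hmul _ _ _ _ ih ha using 2
    push_cast; ring

theorem F_aeval {𝕜 B : Type*} [Field 𝕜] [CommRing B] [Algebra 𝕜 B] (F : ℤ → Submodule 𝕜 B)
    (hone : 1 ∈ F 0) (hmul : ∀ i j a b, a ∈ F i → b ∈ F j → a * b ∈ F (i + j))
    {m : ℤ} {x : Fin 3 → B} (hx : ∀ i, x i ∈ F m) {e : ℕ}
    {g : MvPolynomial (Fin 3) 𝕜} (hg : g.IsHomogeneous e) : aeval x g ∈ F (e * m) := by
  rw [aeval_def, eval₂_eq']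
  refine sum_mem fun s hs => ?_
  rw [← Algebra.smul_def]
  refine Submodule.smul_mem _ _ ?_
  have hd : s.degree = e := by
    by_contra h
    exact mem_support_iff.mp hs (hg.coeff_eq_zero h)
  rw [Finsupp.degree_eq_sum, Fin.sum_univ_three] at hd
  rw [Fin.prod_univ_three]
  have h := hmul _ _ _ _ (hmul _ _ _ _ (F_pow F hone hmul (hx 0) (s 0))
    (F_pow F hone hmul (hx 1) (s 1))) (F_pow F hone hmul (hx 2) (s 2))
  convert h using 2
  rw [← hd]; push_cast; ring

/-- The key step: generators of `P_Ω` move up in a filtration of too small weight. -/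
theorem step {𝕜 B : Type*} [Field 𝕜] [CommRing B] [Algebra 𝕜 B] (F : ℤ → Submodule 𝕜 B)
    (hone : 1 ∈ F 0) (hmul : ∀ i j a b, a ∈ F i → b ∈ F j → a * b ∈ F (i + j))
    {Ω : MvPolynomial (Fin 3) 𝕜} {n : ℕ}
    (hhom : Ω.IsHomogeneous (n + 3)) (hiso : HasIsolatedSingularity Ω)
    {m : ℤ} {x : Fin 3 → B} (hx : ∀ i, x i ∈ F m)
    (hpow : ∀ b ∈ F m, ∀ N : ℕ, N ≠ 0 → b ^ N ∈ F (N * m + 1) → b ∈ F (m + 1))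
    (hD : ∀ k, aeval x (pderiv k Ω) ∈ F ((n + 2) * m + 1)) (i : Fin 3) : x i ∈ F (m + 1) := by
  obtain ⟨e, g, hg, h⟩ := exists_pow hhom hiso i
  refine hpow _ (hx i) (e + (n + 2)) (by omega) ?_
  have h1 := congrArg (aeval x) h
  simp only [map_pow, aeval_X, map_sum, map_mul] at h1
  rw [h1]
  refine sum_mem fun k _ => ?_
  convert hmul _ _ _ _ (F_aeval F hone hmul hx (hg k)) (hD k) using 2
  push_cast; ring

/-- The partial derivatives are brackets. -/
theorem pderiv_bracket {𝕜 : Type*} [Field 𝕜] (Ω : MvPolynomial (Fin 3) 𝕜) (k : Fin 3) :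
    ∃ i j : Fin 3, jacBracket Ω (X i) (X j) = pderiv k Ω := by
  fin_cases k
  · refine ⟨1, 2, ?_⟩
    simp [jacBracket, Matrix.det_fin_three, pderiv_X]
  · refine ⟨2, 0, ?_⟩
    simp [jacBracket, Matrix.det_fin_three, pderiv_X]
  · refine ⟨0, 1, ?_⟩
    simp [jacBracket, Matrix.det_fin_three, pderiv_X]

/-- The projection as an algebra homomorphism. -/
noncomputable def mkA {𝕜 : Type*} [Field 𝕜] (Ω : MvPolynomial (Fin 3) 𝕜) (ξ : 𝕜) :
    MvPolynomial (Fin 3) 𝕜 →ₐ[𝕜] PQuot 𝕜 Ω ξ :=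
  Ideal.Quotient.mkₐ 𝕜 (Ideal.span {Ω - MvPolynomial.C ξ})

theorem mkA_eq {𝕜 : Type*} [Field 𝕜] (Ω : MvPolynomial (Fin 3) 𝕜) (ξ : 𝕜)
    (p : MvPolynomial (Fin 3) 𝕜) : mkA Ω ξ p = PQuot.mk Ω ξ p := rfl

theorem mkA_surj {𝕜 : Type*} [Field 𝕜] (Ω : MvPolynomial (Fin 3) 𝕜) (ξ : 𝕜) :
    Function.Surjective (mkA Ω ξ) := Ideal.Quotient.mk_surjective

theorem mkA_eq_zero {𝕜 : Type*} [Field 𝕜] (Ω : MvPolynomial (Fin 3) 𝕜) (ξ : 𝕜)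
    (p : MvPolynomial (Fin 3) 𝕜) : mkA Ω ξ p = 0 ↔ ∃ G, p = G * (Ω - C ξ) := by
  have h : mkA Ω ξ p = 0 ↔ p ∈ Ideal.span {Ω - MvPolynomial.C ξ} :=
    Ideal.Quotient.eq_zero_iff_mem
  rw [h, Ideal.mem_span_singleton']
  exact ⟨fun ⟨a, h⟩ => ⟨a, h.symm⟩, fun ⟨a, h⟩ => ⟨a, h.symm⟩⟩

/-- The degree filtration on `P_{Ω-ξ}`. -/
noncomputable def Fd {𝕜 : Type*} [Field 𝕜] (Ω : MvPolynomial (Fin 3) 𝕜) (ξ : 𝕜) (i : ℤ) :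
    Submodule 𝕜 (PQuot 𝕜 Ω ξ) := (W 𝕜 i).map (mkA Ω ξ).toLinearMap

theorem mem_Fd {𝕜 : Type*} [Field 𝕜] {Ω : MvPolynomial (Fin 3) 𝕜} {ξ : 𝕜} {i : ℤ}
    {b : PQuot 𝕜 Ω ξ} : b ∈ Fd Ω ξ i ↔ ∃ p ∈ W 𝕜 i, mkA Ω ξ p = b := Iff.rfl

theorem Fd_mul {𝕜 : Type*} [Field 𝕜] (Ω : MvPolynomial (Fin 3) 𝕜) (ξ : 𝕜) (i j : ℤ)
    (a b : PQuot 𝕜 Ω ξ) (ha : a ∈ Fd Ω ξ i) (hb : b ∈ Fd Ω ξ j) : a * b ∈ Fd Ω ξ (i + j) := by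
  obtain ⟨p, hp, rfl⟩ := mem_Fd.mp ha
  obtain ⟨q, hq, rfl⟩ := mem_Fd.mp hb
  exact mem_Fd.mpr ⟨p * q, W_mul hp hq, map_mul _ _ _⟩

theorem Fd_one {𝕜 : Type*} [Field 𝕜] (Ω : MvPolynomial (Fin 3) 𝕜) (ξ : 𝕜) :
    1 ∈ Fd Ω ξ 0 :=
  mem_Fd.mpr ⟨1, by simpa using W_hom (isHomogeneous_one (Fin 3) 𝕜), map_one _⟩

theorem Fd_pow {𝕜 : Type*} [Field 𝕜] {Ω : MvPolynomial (Fin 3) 𝕜} {n : ℕ}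
    (hhom : Ω.IsHomogeneous (n + 3)) (hiso : HasIsolatedSingularity Ω) (ξ : 𝕜)
    (m : ℤ) (hm : m ≤ 0) (b : PQuot 𝕜 Ω ξ) (hb : b ∈ Fd Ω ξ m) (N : ℕ)
    (h : b ^ N ∈ Fd Ω ξ (N * m + 1)) : b ∈ Fd Ω ξ (m + 1) := by
  obtain ⟨k, rfl⟩ : ∃ k : ℕ, m = -k := ⟨m.natAbs, by omega⟩
  obtain ⟨p, hp, rfl⟩ := mem_Fd.mp hb
  obtain ⟨r, hr, hrp⟩ := mem_Fd.mp h
  have h0 : mkA Ω ξ (p ^ N - r) = 0 := by rw [map_sub, map_pow, hrp, sub_self]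
  obtain ⟨G, hG⟩ := (mkA_eq_zero _ _ _).mp h0
  obtain ⟨q, hq⟩ := W_key hhom hiso ξ k N p r G hp hr hG
  refine mem_Fd.mpr ⟨_, hq, ?_⟩
  rw [map_sub, (mkA_eq_zero Ω ξ (q * (Ω - C ξ))).mpr ⟨q, rfl⟩, sub_zero]

theorem Fd_bracket {𝕜 : Type*} [Field 𝕜] {Ω : MvPolynomial (Fin 3) 𝕜} {n : ℕ}
    (hhom : Ω.IsHomogeneous (n + 3)) (ξ : 𝕜)
    (P : PoissonStructure 𝕜 (PQuot 𝕜 Ω ξ)) (hP : IsInducedBracket Ω ξ P) (i j : ℤ)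
    (a b : PQuot 𝕜 Ω ξ) (ha : a ∈ Fd Ω ξ i) (hb : b ∈ Fd Ω ξ j) :
    P.bracket a b ∈ Fd Ω ξ (i + j - n) := by
  obtain ⟨p, hp, rfl⟩ := mem_Fd.mp ha
  obtain ⟨q, hq, rfl⟩ := mem_Fd.mp hb
  rw [mkA_eq, mkA_eq, hP]
  refine mem_Fd.mpr ⟨_, ?_, rfl⟩
  have key : ∀ k₁ k₂ k₃ : Fin 3, pderiv k₁ p * pderiv k₂ q * pderiv k₃ Ω ∈ W 𝕜 (i + j - n) := by
    intro k₁ k₂ k₃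
    convert W_mul (W_mul (W_pderiv k₁ hp) (W_pderiv k₂ hq)) (W_pderiv k₃ (W_hom hhom)) using 2
    push_cast; ring
  rw [jacBracket, Matrix.det_fin_three]
  simp only [Matrix.of_apply, Matrix.cons_val', Matrix.cons_val]
  have := key
  refine sub_mem (add_mem (add_mem (sub_mem (sub_mem (key 0 1 2) (key 0 2 1)) ?_) (key 1 2 0))
    (key 2 0 1)) (key 2 1 0)
  exact key 1 0 2

theorem Fd_one_eq {𝕜 : Type*} [Field 𝕜] (Ω : MvPolynomial (Fin 3) 𝕜) (ξ : 𝕜)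
    (b : PQuot 𝕜 Ω ξ) (hb : b ∈ Fd Ω ξ 1) : b = 0 := by
  obtain ⟨p, hp, rfl⟩ := mem_Fd.mp hb
  have : p = 0 := by
    ext s
    rw [coeff_zero]
    by_contra h
    have := hp s h
    omega
  rw [this, map_zero]

theorem Fd_exh {𝕜 : Type*} [Field 𝕜] (Ω : MvPolynomial (Fin 3) 𝕜) (ξ : 𝕜)
    (b : PQuot 𝕜 Ω ξ) : ∃ k : ℕ, b ∈ Fd Ω ξ (-k) := by
  obtain ⟨p, rfl⟩ := mkA_surj Ω ξ b
  exact ⟨p.totalDegree, mem_Fd.mpr ⟨p, W_iff.mpr le_rfl, rfl⟩⟩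

theorem reduced {𝕜 : Type*} [Field 𝕜] {Ω : MvPolynomial (Fin 3) 𝕜} {n : ℕ}
    (hhom : Ω.IsHomogeneous (n + 3)) (hiso : HasIsolatedSingularity Ω) (ξ : 𝕜)
    (b : PQuot 𝕜 Ω ξ) (N : ℕ) (hb : b ^ N = 0) : b = 0 := by
  obtain ⟨k, hk⟩ := Fd_exh Ω ξ b
  have key : ∀ k : ℕ, b ∈ Fd Ω ξ (-k) → b ∈ Fd Ω ξ 1 := by
    intro k
    induction k with
    | zero =>
      intro h
      have := Fd_pow hhom hiso ξ _ (by simp) b h N (by rw [hb]; exact zero_mem _)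
      simpa using this
    | succ k ih =>
      intro h
      have := Fd_pow hhom hiso ξ _ (by omega) b h N (by rw [hb]; exact zero_mem _)
      apply ih
      convert this using 2
      push_cast; ring
  exact Fd_one_eq Ω ξ b (key k hk)

theorem points {𝕜 : Type*} [Field 𝕜] [IsAlgClosed 𝕜] {Ω : MvPolynomial (Fin 3) 𝕜} {n : ℕ}
    (hhom : Ω.IsHomogeneous (n + 3)) (hiso : HasIsolatedSingularity Ω) (ξ : 𝕜)
    (b : PQuot 𝕜 Ω ξ) (hb : ∀ φ : PQuot 𝕜 Ω ξ →ₐ[𝕜] 𝕜, φ b = 0) : b = 0 := by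
  obtain ⟨p, rfl⟩ := mkA_surj Ω ξ b
  set I : Ideal (MvPolynomial (Fin 3) 𝕜) := Ideal.span {Ω - MvPolynomial.C ξ} with hI
  have h1 : p ∈ vanishingIdeal 𝕜 (zeroLocus 𝕜 I) := by
    intro x hx
    let φ : PQuot 𝕜 Ω ξ →ₐ[𝕜] 𝕜 := Ideal.Quotient.liftₐ I (aeval x) hx
    exact hb φ
  rw [vanishingIdeal_zeroLocus_eq_radical] at h1
  obtain ⟨N, hN⟩ := h1
  refine reduced hhom hiso ξ _ N ?_
  rw [← map_pow]
  exact Ideal.Quotient.eq_zero_iff_mem.mpr hN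

/-- The subspace `A ⊗ V` of `A ⊗ R`. -/
noncomputable def T {𝕜 : Type*} (A : Type*) {R : Type*} [Field 𝕜] [CommRing A] [CommRing R]
    [Algebra 𝕜 A] [Algebra 𝕜 R] (V : Submodule 𝕜 R) : Submodule 𝕜 (A ⊗[𝕜] R) :=
  LinearMap.range (LinearMap.lTensor A V.subtype)

theorem T_tmul {𝕜 A R : Type*} [Field 𝕜] [CommRing A] [CommRing R]
    [Algebra 𝕜 A] [Algebra 𝕜 R] (V : Submodule 𝕜 R) (a : A) {r : R} (hr : r ∈ V) :
    a ⊗ₜ[𝕜] r ∈ T A V := ⟨a ⊗ₜ[𝕜] ⟨r, hr⟩, rfl⟩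

theorem T_induction {𝕜 A R : Type*} [Field 𝕜] [CommRing A] [CommRing R]
    [Algebra 𝕜 A] [Algebra 𝕜 R] (V : Submodule 𝕜 R) (p : A ⊗[𝕜] R → Prop) (h0 : p 0)
    (ht : ∀ (a : A), ∀ r ∈ V, p (a ⊗ₜ r)) (hadd : ∀ x y, p x → p y → p (x + y))
    {b : A ⊗[𝕜] R} (hb : b ∈ T A V) : p b := by
  obtain ⟨c, rfl⟩ := hb
  induction c using TensorProduct.induction_on with
  | zero => simpa using h0
  | tmul a v => exact ht a v v.2
  | add x y hx hy => rw [map_add]; exact hadd _ _ hx hy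

theorem T_anti {𝕜 A R : Type*} [Field 𝕜] [CommRing A] [CommRing R]
    [Algebra 𝕜 A] [Algebra 𝕜 R] {V V' : Submodule 𝕜 R} (h : V ≤ V') : T A V ≤ T A V' := by
  intro b hb
  exact T_induction V (fun b => b ∈ T A V') (zero_mem _) (fun a r hr => T_tmul V' a (h hr))
    (fun _ _ => add_mem) hb

/-- Evaluation of `A ⊗ R` at a point of `A`. -/
noncomputable def ev {𝕜 A : Type*} (R : Type*) [Field 𝕜] [CommRing A] [CommRing R]
    [Algebra 𝕜 A] [Algebra 𝕜 R] (φ : A →ₐ[𝕜] 𝕜) : A ⊗[𝕜] R →ₐ[𝕜] R :=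
  (Algebra.TensorProduct.lid 𝕜 R).toAlgHom.comp (Algebra.TensorProduct.map φ (AlgHom.id 𝕜 R))

theorem ev_tmul {𝕜 A R : Type*} [Field 𝕜] [CommRing A] [CommRing R]
    [Algebra 𝕜 A] [Algebra 𝕜 R] (φ : A →ₐ[𝕜] 𝕜) (a : A) (r : R) :
    ev R φ (a ⊗ₜ r) = φ a • r := by
  simp [ev]

theorem ev_mem {𝕜 A R : Type*} [Field 𝕜] [CommRing A] [CommRing R]
    [Algebra 𝕜 A] [Algebra 𝕜 R] (V : Submodule 𝕜 R) (φ : A →ₐ[𝕜] 𝕜) {b : A ⊗[𝕜] R}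
    (hb : b ∈ T A V) : ev R φ b ∈ V := by
  refine T_induction V (fun b => ev R φ b ∈ V) (by simp) ?_ ?_ hb
  · intro a r hr
    rw [ev_tmul]
    exact V.smul_mem _ hr
  · intro x y hx hy
    rw [map_add]
    exact add_mem hx hy

theorem T_of_points {𝕜 A R : Type*} [Field 𝕜] [CommRing A] [CommRing R]
    [Algebra 𝕜 A] [Algebra 𝕜 R] (hA : ∀ a : A, (∀ φ : A →ₐ[𝕜] 𝕜, φ a = 0) → a = 0)
    (V : Submodule 𝕜 R) {b : A ⊗[𝕜] R}
    (hb : ∀ φ : A →ₐ[𝕜] 𝕜, ev R φ b ∈ V) : b ∈ T A V := by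
  have hex := lTensor_exact A (f := V.subtype) (g := V.mkQ)
    (LinearMap.exact_subtype_mkQ V) V.mkQ_surjective
  rw [T, LinearMap.mem_range]
  refine (hex b).mp ?_
  set c := LinearMap.lTensor A V.mkQ b with hc
  classical
  let bs := Module.Basis.ofVectorSpace 𝕜 (R ⧸ V)
  have hev : ∀ φ : A →ₐ[𝕜] 𝕜,
      TensorProduct.lid 𝕜 (R ⧸ V) (LinearMap.rTensor (R ⧸ V) φ.toLinearMap c) = 0 := by
    intro φ
    have h1 : ∀ x : A ⊗[𝕜] R, TensorProduct.lid 𝕜 (R ⧸ V) (LinearMap.rTensor (R ⧸ V)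
        φ.toLinearMap (LinearMap.lTensor A V.mkQ x)) = V.mkQ (ev R φ x) := by
      intro x
      induction x using TensorProduct.induction_on with
      | zero => simp
      | tmul a r => simp [ev_tmul]
      | add x y hx hy => simp only [map_add, hx, hy]
    rw [hc, h1]
    simpa using hb φ
  have hcomm : ∀ (φ : A →ₐ[𝕜] 𝕜) (i) (x : A ⊗[𝕜] (R ⧸ V)),
      φ (TensorProduct.equivFinsuppOfBasisRight bs x i) = bs.repr
        (TensorProduct.lid 𝕜 (R ⧸ V) (LinearMap.rTensor (R ⧸ V) φ.toLinearMap x)) i := by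
    intro φ i x
    induction x using TensorProduct.induction_on with
    | zero => simp
    | tmul a r => 
      simp [mul_comm]
    | add x y hx hy => simp only [map_add, Finsupp.add_apply, hx, hy]
  apply (TensorProduct.equivFinsuppOfBasisRight bs (M := A)).injective
  rw [map_zero]
  ext i
  refine hA _ fun φ => ?_
  rw [hcomm, hev, map_zero]
  rfl

theorem T_mul {𝕜 A R : Type*} [Field 𝕜] [CommRing A] [CommRing R]
    [Algebra 𝕜 A] [Algebra 𝕜 R] (V V' V'' : Submodule 𝕜 R)
    (h : ∀ r ∈ V, ∀ r' ∈ V', r * r' ∈ V'') {b b' : A ⊗[𝕜] R}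
    (hb : b ∈ T A V) (hb' : b' ∈ T A V') : b * b' ∈ T A V'' := by
  refine T_induction V (fun b => b * b' ∈ T A V'') (by simp) ?_ ?_ hb
  · intro a r hr
    refine T_induction V' (fun b' => a ⊗ₜ r * b' ∈ T A V'') (by simp) ?_ ?_ hb'
    · intro a' r' hr'
      rw [Algebra.TensorProduct.tmul_mul_tmul]
      exact T_tmul _ _ (h r hr r' hr')
    · intro x y hx hy
      rw [mul_add]
      exact add_mem hx hy
  · intro x y hx hy
    rw [add_mul]
    exact add_mem hx hy

theorem bracket_add_right {𝕜 A : Type*} [CommRing 𝕜] [CommRing A] [Algebra 𝕜 A]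
    (P : PoissonStructure 𝕜 A) (a b c : A) :
    P.bracket a (b + c) = P.bracket a b + P.bracket a c := by
  rw [P.antisymm, P.add_left, P.antisymm a b, P.antisymm a c]; ring

theorem bracket_zero_left {𝕜 A : Type*} [CommRing 𝕜] [CommRing A] [Algebra 𝕜 A]
    (P : PoissonStructure 𝕜 A) (a : A) : P.bracket 0 a = 0 := by
  have := P.smul_left 0 0 a
  simpa using this

theorem bracket_zero_right {𝕜 A : Type*} [CommRing 𝕜] [CommRing A] [Algebra 𝕜 A]
    (P : PoissonStructure 𝕜 A) (a : A) : P.bracket a 0 = 0 := by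
  rw [P.antisymm, bracket_zero_left, neg_zero]

theorem bracket_one_right {𝕜 A : Type*} [CommRing 𝕜] [CommRing A] [Algebra 𝕜 A]
    (P : PoissonStructure 𝕜 A) (a : A) : P.bracket a 1 = 0 := by
  have := P.leibniz a 1 1
  simpa using this

theorem T_bracket {𝕜 A R : Type*} [Field 𝕜] [CommRing A] [CommRing R]
    [Algebra 𝕜 A] [Algebra 𝕜 R] (PA : PoissonStructure 𝕜 A) (PR : PoissonStructure 𝕜 R)
    (PT : PoissonStructure 𝕜 (A ⊗[𝕜] R)) (hPT : IsTensorBracket PA PR PT)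
    (V V' V'' : Submodule 𝕜 R)
    (h : ∀ r ∈ V, ∀ r' ∈ V', r * r' ∈ V'') (hbr : ∀ r ∈ V, ∀ r' ∈ V', PR.bracket r r' ∈ V'')
    {b b' : A ⊗[𝕜] R}
    (hb : b ∈ T A V) (hb' : b' ∈ T A V') : PT.bracket b b' ∈ T A V'' := by
  refine T_induction V (fun b => PT.bracket b b' ∈ T A V'')
    (by rw [bracket_zero_left]; exact zero_mem _) ?_ ?_ hb
  · intro a r hr
    refine T_induction V' (fun b' => PT.bracket (a ⊗ₜ r) b' ∈ T A V'')
      (by rw [bracket_zero_right]; exact zero_mem _) ?_ ?_ hb'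
    · intro a' r' hr'
      rw [hPT]
      exact add_mem (T_tmul _ _ (h r hr r' hr')) (T_tmul _ _ (hbr r hr r' hr'))
    · intro x y hx hy
      rw [bracket_add_right]
      exact add_mem hx hy
  · intro x y hx hy
    rw [PT.add_left]
    exact add_mem hx hy

/-- The valuation filtration on `R`. -/
def Fv {𝕜 R : Type*} [Field 𝕜] [CommRing R] [Algebra 𝕜 R] {PR : PoissonStructure 𝕜 R} {w : ℤ}
    {ν : R → WithTop ℤ} (hν : IsWValuation PR w ν) (i : ℤ) : Submodule 𝕜 R where
  carrier := {r | (i : WithTop ℤ) ≤ ν r}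
  zero_mem' := by
    show (i : WithTop ℤ) ≤ ν 0
    rw [(hν.eq_top_iff 0).mpr rfl]
    exact le_top
  add_mem' := fun {a b} ha hb => (le_min ha hb).trans (hν.map_add a b)
  smul_mem' := by
    intro c r hr
    show (i : WithTop ℤ) ≤ ν (c • r)
    by_cases hc : c = 0
    · rw [hc, zero_smul, (hν.eq_top_iff 0).mpr rfl]
      exact le_top
    · rw [Algebra.smul_def, hν.map_mul, hν.scalar c hc, zero_add]
      exact hr

theorem mem_Fv {𝕜 R : Type*} [Field 𝕜] [CommRing R] [Algebra 𝕜 R] {PR : PoissonStructure 𝕜 R}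
    {w : ℤ} {ν : R → WithTop ℤ} (hν : IsWValuation PR w ν) (i : ℤ) (r : R) :
    r ∈ Fv hν i ↔ (i : WithTop ℤ) ≤ ν r := Iff.rfl

theorem Fv_anti {𝕜 R : Type*} [Field 𝕜] [CommRing R] [Algebra 𝕜 R] {PR : PoissonStructure 𝕜 R}
    {w : ℤ} {ν : R → WithTop ℤ} (hν : IsWValuation PR w ν) {i j : ℤ} (h : i ≤ j) :
    Fv hν j ≤ Fv hν i := fun r hr =>
  le_trans (WithTop.coe_le_coe.mpr h) ((mem_Fv hν j r).mp hr)

theorem Fv_mul {𝕜 R : Type*} [Field 𝕜] [CommRing R] [Algebra 𝕜 R] {PR : PoissonStructure 𝕜 R}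
    {w : ℤ} {ν : R → WithTop ℤ} (hν : IsWValuation PR w ν) (i j : ℤ) (a b : R)
    (ha : a ∈ Fv hν i) (hb : b ∈ Fv hν j) : a * b ∈ Fv hν (i + j) := by
  rw [mem_Fv] at *
  rw [hν.map_mul, WithTop.coe_add]
  exact add_le_add ha hb

theorem Fv_bracket {𝕜 R : Type*} [Field 𝕜] [CommRing R] [Algebra 𝕜 R]
    {PR : PoissonStructure 𝕜 R}
    {w : ℤ} {ν : R → WithTop ℤ} (hν : IsWValuation PR w ν) (i j : ℤ) (a b : R)
    (ha : a ∈ Fv hν i) (hb : b ∈ Fv hν j) : PR.bracket a b ∈ Fv hν (i + j - w) := by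
  rw [mem_Fv] at *
  have h := (add_le_add ha hb).trans (hν.map_bracket a b)
  cases hx : ν (PR.bracket a b) with
  | top => exact le_top
  | coe x =>
    rw [hx] at h
    norm_cast at h ⊢
    omega

theorem Fv_pow {𝕜 R : Type*} [Field 𝕜] [CommRing R] [Algebra 𝕜 R] {PR : PoissonStructure 𝕜 R}
    {w : ℤ} {ν : R → WithTop ℤ} (hν : IsWValuation PR w ν) (m : ℤ) (a : R) (N : ℕ) (_hN : N ≠ 0)
    (h : a ^ N ∈ Fv hν (N * m + 1)) : a ∈ Fv hν (m + 1) := by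
  rw [mem_Fv] at *
  cases hx : ν a with
  | top => exact le_top
  | coe x =>
    have hp : ∀ M : ℕ, ν (a ^ M) = ((M * x : ℤ) : WithTop ℤ) := by
      intro M
      induction M with
      | zero => simpa using hν.scalar 1 one_ne_zero
      | succ M ih =>
        rw [pow_succ, hν.map_mul, ih, hx, ← WithTop.coe_add]
        congr 1
        push_cast; ring
    rw [hp] at h
    norm_cast at h ⊢
    by_contra hlt
    have : (N : ℤ) * x ≤ N * m := mul_le_mul_of_nonneg_left (by omega) (by omega)
    omega

theorem T_exh {𝕜 A R : Type*} [Field 𝕜] [CommRing A] [CommRing R] [Algebra 𝕜 A] [Algebra 𝕜 R]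
    {PR : PoissonStructure 𝕜 R}
    {w : ℤ} {ν : R → WithTop ℤ} (hν : IsWValuation PR w ν) (b : A ⊗[𝕜] R) :
    ∃ k : ℕ, b ∈ T A (Fv hν (-k)) := by
  induction b using TensorProduct.induction_on with
  | zero => exact ⟨0, zero_mem _⟩
  | tmul a r =>
    cases hx : ν r with
    | top => exact ⟨0, T_tmul _ _ (by rw [mem_Fv, hx]; exact le_top)⟩
    | coe x =>
      refine ⟨x.natAbs, T_tmul _ _ ?_⟩
      rw [mem_Fv, hx, WithTop.coe_le_coe]
      omega
  | add x y hx hy =>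
    obtain ⟨k, hk⟩ := hx
    obtain ⟨l, hl⟩ := hy
    refine ⟨k + l, add_mem (T_anti (Fv_anti hν ?_) hk) (T_anti (Fv_anti hν ?_) hl)⟩ <;>
    · push_cast; omega

theorem coord_mem {𝕜 A R ι : Type*} [Field 𝕜] [CommRing A] [CommRing R] [Algebra 𝕜 A]
    [Algebra 𝕜 R] [DecidableEq ι] (bs : Module.Basis ι 𝕜 A) (V : Submodule 𝕜 R) {b : A ⊗[𝕜] R}
    (hb : b ∈ T A V) (i : ι) : TensorProduct.equivFinsuppOfBasisLeft bs b i ∈ V := by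
  refine T_induction V (fun b => TensorProduct.equivFinsuppOfBasisLeft bs b i ∈ V)
    (by simp) ?_ ?_ hb
  · intro a r hr
    rw [TensorProduct.equivFinsuppOfBasisLeft_apply_tmul_apply]
    exact V.smul_mem _ hr
  · intro x y hx hy
    rw [map_add, Finsupp.add_apply]
    exact add_mem hx hy

theorem aeval_rel {𝕜 B : Type*} [Field 𝕜] [CommRing B] [Algebra 𝕜 B]
    {Ω : MvPolynomial (Fin 3) 𝕜} {ξ : 𝕜}
    {P : PoissonStructure 𝕜 (PQuot 𝕜 Ω ξ)} (hP : IsInducedBracket Ω ξ P)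
    {PB : PoissonStructure 𝕜 B} {f : PQuot 𝕜 Ω ξ →ₐ[𝕜] B} (hf : IsPoissonHom P PB f)
    (F : ℤ → Submodule 𝕜 B) (m l : ℤ)
    (hF : ∀ a b, a ∈ F m → b ∈ F m → PB.bracket a b ∈ F l)
    (hx : ∀ i, f (mkA Ω ξ (X i)) ∈ F m) (k : Fin 3) :
    aeval (fun i => f (mkA Ω ξ (X i))) (pderiv k Ω) ∈ F l := by
  obtain ⟨i, j, hij⟩ := pderiv_bracket Ω k
  have h1 : aeval (fun i => f (mkA Ω ξ (X i))) (pderiv k Ω) = f (mkA Ω ξ (pderiv k Ω)) := by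
    have : aeval (fun i => f (mkA Ω ξ (X i))) = f.comp (mkA Ω ξ) := by
      apply MvPolynomial.algHom_ext
      intro i
      simp
    rw [this]; rfl
  rw [h1, ← hij, mkA_eq, ← hP, hf]
  exact hF _ _ (hx i) (hx j)


theorem Fd_anti {𝕜 : Type*} [Field 𝕜] (Ω : MvPolynomial (Fin 3) 𝕜) (ξ : 𝕜) {i j : ℤ}
    (h : i ≤ j) : Fd Ω ξ j ≤ Fd Ω ξ i := Submodule.map_mono (W_anti h)

/-- Iterating the key step. -/
theorem descend {𝕜 B : Type*} [Field 𝕜] [CommRing B] [Algebra 𝕜 B] (F : ℤ → Submodule 𝕜 B)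
    (x : Fin 3 → B) (l : ℕ) (hanti : ∀ i j : ℤ, i ≤ j → F j ≤ F i)
    (hexh : ∀ b, ∃ k : ℕ, b ∈ F (-k))
    (hstep : ∀ m : ℤ, m + 1 ≤ -l → (∀ i, x i ∈ F m) → ∀ i, x i ∈ F (m + 1)) (i : Fin 3) :
    x i ∈ F (-l) := by
  choose k hk using fun i => hexh (x i)
  have key : ∀ t : ℕ, (∀ i, x i ∈ F (-l - t)) → ∀ i, x i ∈ F (-l) := by
    intro t
    induction t with
    | zero => intro h; simpa using h
    | succ t ih =>
      intro h
      apply ih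
      have := hstep _ (by push_cast; omega) h
      intro i
      convert this i using 2
      push_cast; ring
  refine key (k 0 + k 1 + k 2) (fun i => hanti _ _ ?_ (hk i)) i
  fin_cases i <;> (simp; omega)

theorem tensor_part {𝕜 A R : Type*} [Field 𝕜] [CommRing A] [CommRing R] [Algebra 𝕜 A]
    [Algebra 𝕜 R] (hA : ∀ a : A, (∀ φ : A →ₐ[𝕜] 𝕜, φ a = 0) → a = 0)
    {n : ℕ} (hn : 1 ≤ n) {Ω : MvPolynomial (Fin 3) 𝕜}
    (hhom : Ω.IsHomogeneous (n + 3)) (hiso : HasIsolatedSingularity Ω) {ξ : 𝕜}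
    {P : PoissonStructure 𝕜 (PQuot 𝕜 Ω ξ)} (hP : IsInducedBracket Ω ξ P)
    {PA : PoissonStructure 𝕜 A} {PR : PoissonStructure 𝕜 R}
    {PT : PoissonStructure 𝕜 (A ⊗[𝕜] R)} (hPT : IsTensorBracket PA PR PT)
    {f : PQuot 𝕜 Ω ξ →ₐ[𝕜] A ⊗[𝕜] R} (hf : IsPoissonHom P PT f)
    {ν : R → WithTop ℤ} (hν : IsWValuation PR ((n : ℤ) - 1) ν) (i : Fin 3) :
    f (mkA Ω ξ (X i)) ∈ T A (Fv hν 0) := by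
  have hone : (1 : A ⊗[𝕜] R) ∈ T A (Fv hν 0) := by
    refine T_tmul _ _ ?_
    rw [mem_Fv]
    have := hν.scalar 1 one_ne_zero
    rw [map_one] at this
    rw [this]; rfl
  have hmul : ∀ i j (a b : A ⊗[𝕜] R), a ∈ T A (Fv hν i) → b ∈ T A (Fv hν j) →
      a * b ∈ T A (Fv hν (i + j)) := fun i j a b ha hb =>
    T_mul _ _ _ (fun r hr r' hr' => Fv_mul hν i j r r' hr hr') ha hb
  have h := descend (fun i => T A (Fv hν i)) (fun i => f (mkA Ω ξ (X i))) 0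
    (fun i j hij => T_anti (Fv_anti hν hij)) (T_exh hν) ?_ i
  · simpa using h
  · intro m hm hx
    refine step (fun i => T A (Fv hν i)) hone hmul hhom hiso hx ?_ ?_
    · intro b _ N hN hb
      refine T_of_points hA _ fun φ => ?_
      refine Fv_pow hν m _ N hN ?_
      rw [← map_pow]
      exact ev_mem _ φ hb
    · refine aeval_rel hP hf (fun i => T A (Fv hν i)) m _ ?_ hx
      intro a b ha hb
      refine T_anti (Fv_anti hν (j := m + m - ((n : ℤ) - 1)) ?_) ?_
      · have : (n : ℤ) * (m + 1) ≤ 0 := mul_nonpos_of_nonneg_of_nonpos (by omega) (by simpa using hm)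
        linarith
      · refine T_bracket PA PR PT hPT (Fv hν m) (Fv hν m) _ ?_ ?_ ha hb
        · intro r hr r' hr'
          exact Fv_anti hν (by omega) (Fv_mul hν m m r r' hr hr')
        · intro r hr r' hr'
          exact Fv_bracket hν m m r r' hr hr'

theorem scalar_part {𝕜 A R : Type*} [Field 𝕜] [CommRing A] [CommRing R] [Algebra 𝕜 A]
    [Algebra 𝕜 R] {PR : PoissonStructure 𝕜 R} {w : ℤ}
    (hR : ∀ r : R, (¬ ∃ c : 𝕜, r = algebraMap 𝕜 R c) →
      ∃ ν : R → WithTop ℤ, IsWValuation PR w ν ∧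
        (∀ x : R, x ≠ 0 → ν x ≤ 0) ∧ ν r < 0)
    (b : A ⊗[𝕜] R)
    (hb : ∀ (ν : R → WithTop ℤ) (hν : IsWValuation PR w ν), b ∈ T A (Fv hν 0)) :
    ∃ a : A, a ⊗ₜ[𝕜] (1 : R) = b := by
  classical
  let bs := Module.Basis.ofVectorSpace 𝕜 A
  have hc : ∀ i, ∃ c : 𝕜, TensorProduct.equivFinsuppOfBasisLeft bs b i = algebraMap 𝕜 R c := by
    intro i
    by_contra hcon
    obtain ⟨ν, hν, -, hlt⟩ := hR _ hcon
    have h := coord_mem bs _ (hb ν hν) i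
    rw [mem_Fv] at h
    exact absurd hlt (not_lt.mpr h)
  choose c hc using hc
  have h1 : b = (TensorProduct.equivFinsuppOfBasisLeft bs).symm
    (TensorProduct.equivFinsuppOfBasisLeft bs b) := by simp
  rw [TensorProduct.equivFinsuppOfBasisLeft_symm_apply] at h1
  refine ⟨∑ i ∈ (TensorProduct.equivFinsuppOfBasisLeft bs b).support, c i • bs i, ?_⟩
  conv_rhs => rw [h1]
  rw [TensorProduct.sum_tmul, Finsupp.sum]
  refine Finset.sum_congr rfl fun i _ => ?_
  rw [hc i, Algebra.algebraMap_eq_smul_one, TensorProduct.smul_tmul]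

theorem W_one_le {𝕜 : Type*} [Field 𝕜] :
    W 𝕜 (-1) ≤ Submodule.span 𝕜 (insert 1 (Set.range (X : Fin 3 → MvPolynomial (Fin 3) 𝕜))) := by
  intro p hp
  rw [p.as_sum]
  refine sum_mem fun s hs => ?_
  have hd := hp s (mem_support_iff.mp hs)
  have hd' : s.degree = 0 ∨ s.degree = 1 := by omega
  have h1 : monomial s (coeff s p) = coeff s p • monomial s (1 : 𝕜) := by
    rw [smul_monomial, smul_eq_mul, mul_one]
  rw [h1]
  refine Submodule.smul_mem _ _ (Submodule.subset_span ?_)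
  rcases hd' with h | h
  · rw [Finsupp.degree_eq_zero_iff] at h
    left
    rw [h]; rfl
  · right
    obtain ⟨i, hi⟩ : ∃ i, s = Finsupp.single i 1 := by
      rw [Finsupp.degree_eq_sum, Fin.sum_univ_three] at h
      have h' : s 0 = 1 ∧ s 1 = 0 ∧ s 2 = 0 ∨ s 0 = 0 ∧ s 1 = 1 ∧ s 2 = 0 ∨
        s 0 = 0 ∧ s 1 = 0 ∧ s 2 = 1 := by omega
      rcases h' with ⟨h0, h1, h2⟩ | ⟨h0, h1, h2⟩ | ⟨h0, h1, h2⟩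
      · exact ⟨0, by ext j; fin_cases j <;> simp [h0, h1, h2]⟩
      · exact ⟨1, by ext j; fin_cases j <;> simp [h0, h1, h2]⟩
      · exact ⟨2, by ext j; fin_cases j <;> simp [h0, h1, h2]⟩
    exact ⟨i, by rw [hi]; rfl⟩

theorem surj_part {𝕜 : Type*} [Field 𝕜] {n : ℕ} (hn : 1 ≤ n) {Ω Ω' : MvPolynomial (Fin 3) 𝕜}
    (hhom : Ω.IsHomogeneous (n + 3)) (hhom' : Ω'.IsHomogeneous (n + 3))
    (hiso : HasIsolatedSingularity Ω) (hiso' : HasIsolatedSingularity Ω') {ξ ξ' : 𝕜}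
    {P : PoissonStructure 𝕜 (PQuot 𝕜 Ω ξ)} (hP : IsInducedBracket Ω ξ P)
    {P' : PoissonStructure 𝕜 (PQuot 𝕜 Ω' ξ')} (hP' : IsInducedBracket Ω' ξ' P')
    {g : PQuot 𝕜 Ω ξ →ₐ[𝕜] PQuot 𝕜 Ω' ξ'} (hg : IsPoissonHom P P' g)
    (hinj : Function.Injective g) : Function.Surjective g := by
  have hx : ∀ i, g (mkA Ω ξ (X i)) ∈ Fd Ω' ξ' (-1) := by
    intro i
    have h := descend (Fd Ω' ξ') (fun i => g (mkA Ω ξ (X i))) 1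
      (fun i j hij => Fd_anti Ω' ξ' hij) (Fd_exh Ω' ξ') ?_ i
    · simpa using h
    · intro m hm hx
      refine step (Fd Ω' ξ') (Fd_one _ _) (Fd_mul _ _) hhom hiso hx ?_ ?_
      · intro b hb N _ h
        exact Fd_pow hhom' hiso' ξ' m (by push_cast at hm; omega) b hb N h
      · refine aeval_rel hP hg (Fd Ω' ξ') m _ ?_ hx
        intro a b ha hb
        refine Fd_anti Ω' ξ' ?_ (Fd_bracket hhom' ξ' P' hP' m m a b ha hb)
        have : (n : ℤ) * (m + 2) ≤ 0 := mul_nonpos_of_nonneg_of_nonpos (by omega)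
          (by push_cast at hm; omega)
        have : (1 : ℤ) ≤ n := by exact_mod_cast hn
        linarith
  have hmap : ∀ p ∈ W 𝕜 (-1), g (mkA Ω ξ p) ∈ Fd Ω' ξ' (-1) := by
    intro p hp
    refine Submodule.span_induction (p := fun p _ => g (mkA Ω ξ p) ∈ Fd Ω' ξ' (-1))
      ?_ ?_ ?_ ?_ (W_one_le hp)
    · rintro q (rfl | ⟨i, rfl⟩)
      · rw [map_one, map_one]
        exact Fd_anti _ _ (by norm_num) (Fd_one Ω' ξ')
      · exact hx i
    · simp
    · intro a b _ _ ha hb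
      rw [map_add, map_add]
      exact add_mem ha hb
    · intro c a _ ha
      rw [map_smul, map_smul]
      exact Submodule.smul_mem _ _ ha
  have hfd0 : FiniteDimensional 𝕜 (Submodule.span 𝕜
      (insert 1 (Set.range (X : Fin 3 → MvPolynomial (Fin 3) 𝕜)))) :=
    FiniteDimensional.span_of_finite 𝕜 ((Set.finite_range _).insert _)
  have hfd : FiniteDimensional 𝕜 (W 𝕜 (-1)) := Submodule.finiteDimensional_of_le W_one_le
  have hfd' : FiniteDimensional 𝕜 (Fd Ω' ξ' (-1)) := by
    unfold Fd; infer_instance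
  let e : W 𝕜 (-1) →ₗ[𝕜] Fd Ω' ξ' (-1) :=
    (g.toLinearMap.comp (mkA Ω ξ).toLinearMap).restrict hmap
  have h0 := ne_zero_of_iso hhom hiso
  have htd := totalDegree_pot ξ hhom h0
  have hQ0 : Ω - C ξ ≠ 0 := by
    intro h
    rw [h] at htd
    simp at htd
  have he : Function.Injective e := by
    rw [← LinearMap.ker_eq_bot, LinearMap.ker_eq_bot']
    rintro ⟨p, hp⟩ hp0
    have h1 : g (mkA Ω ξ p) = 0 := congrArg Subtype.val hp0
    have h2 : mkA Ω ξ p = 0 := hinj (by rw [h1, map_zero])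
    obtain ⟨G, hG⟩ := (mkA_eq_zero _ _ _).mp h2
    have h3 : p = 0 := by
      by_cases hG0 : G = 0
      · rw [hG, hG0, zero_mul]
      · have h4 := (W_iff (k := 1)).mp (by simpa using hp)
        rw [hG, totalDegree_mul_of_isDomain hG0 hQ0, htd] at h4
        omega
    exact Subtype.ext h3
  have hrank : Module.finrank 𝕜 (W 𝕜 (-1)) = Module.finrank 𝕜 (Fd Ω' ξ' (-1)) :=
    le_antisymm (LinearMap.finrank_le_finrank_of_injective he)
      (Submodule.finrank_map_le _ _)
  have hsurj : Function.Surjective e :=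
    (LinearMap.injective_iff_surjective_of_finrank_eq_finrank hrank).mp he
  have hX : ∀ i, mkA Ω' ξ' (X i) ∈ g.range := by
    intro i
    have hi : mkA Ω' ξ' (X i) ∈ Fd Ω' ξ' (-1) :=
      mem_Fd.mpr ⟨X i, by simpa using W_hom (isHomogeneous_X 𝕜 i), rfl⟩
    obtain ⟨p, hp⟩ := hsurj ⟨_, hi⟩
    exact ⟨mkA Ω ξ p, congrArg Subtype.val hp⟩
  intro b
  obtain ⟨p, rfl⟩ := mkA_surj Ω' ξ' b
  show mkA Ω' ξ' p ∈ g.range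
  induction p using MvPolynomial.induction_on with
  | C c => 
    have : mkA Ω' ξ' (C c) = algebraMap 𝕜 _ c := (mkA Ω' ξ').commutes c
    rw [this]
    exact g.range.algebraMap_mem c
  | add p q hp hq => rw [map_add]; exact add_mem hp hq
  | mul_X p i hp => rw [map_mul]; exact mul_mem hp (hX i)

theorem factor {𝕜 A B D : Type*} [Field 𝕜] [CommRing A] [CommRing B] [CommRing D]
    [Algebra 𝕜 A] [Algebra 𝕜 B] [Algebra 𝕜 D] (f : A →ₐ[𝕜] D) (j : B →ₐ[𝕜] D)
    (hj : Function.Injective j) (h : ∀ a, f a ∈ j.range) :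
    ∃ g : A →ₐ[𝕜] B, ∀ a, j (g a) = f a := by
  refine ⟨(AlgEquiv.ofInjective j hj).symm.toAlgHom.comp (f.codRestrict j.range h), fun a => ?_⟩
  have h1 := (AlgEquiv.ofInjective j hj).apply_symm_apply (f.codRestrict j.range h a)
  exact congrArg Subtype.val h1

end RelDix

/-- Theorem 2.15: the class `𝒫ₙ` is `ℱ_{n-1}`-Dixmier: any injective Poisson morphism
`P_{Ω-ξ} → P_{Ω'-ξ'} ⊗ R`, with `R` a Poisson domain all of whose elements outside `𝕜·1`
are detected by a negative nonpositive `(n-1)`-valuation, has image `P_{Ω'-ξ'} ⊗ 𝕜·1`. -/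
theorem potentials_relDixmier_of_valuation_condition
    {𝕜 R : Type*} [Field 𝕜] [IsAlgClosed 𝕜] [CharZero 𝕜]
    [CommRing R] [IsDomain R] [Algebra 𝕜 R]
    (n : ℕ) (hn : 1 ≤ n)
    (Ω Ω' : MvPolynomial (Fin 3) 𝕜)
    (hhom : Ω.IsHomogeneous (n + 3)) (hhom' : Ω'.IsHomogeneous (n + 3))
    (hiso : HasIsolatedSingularity Ω) (hiso' : HasIsolatedSingularity Ω')
    (ξ ξ' : 𝕜)
    (P : PoissonStructure 𝕜 (PQuot 𝕜 Ω ξ)) (hP : IsInducedBracket Ω ξ P)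
    (P' : PoissonStructure 𝕜 (PQuot 𝕜 Ω' ξ')) (hP' : IsInducedBracket Ω' ξ' P')
    (PR : PoissonStructure 𝕜 R)
    (hR : ∀ r : R, (¬ ∃ c : 𝕜, r = algebraMap 𝕜 R c) →
      ∃ ν : R → WithTop ℤ, IsWValuation PR ((n : ℤ) - 1) ν ∧
        (∀ x : R, x ≠ 0 → ν x ≤ 0) ∧ ν r < 0)
    (PT : PoissonStructure 𝕜 (PQuot 𝕜 Ω' ξ' ⊗[𝕜] R)) (hPT : IsTensorBracket P' PR PT)
    (f : PQuot 𝕜 Ω ξ →ₐ[𝕜] PQuot 𝕜 Ω' ξ' ⊗[𝕜] R)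
    (hf : IsPoissonHom P PT f) (hinj : Function.Injective f) :
    Set.range f = Set.range fun p : PQuot 𝕜 Ω' ξ' => p ⊗ₜ[𝕜] (1 : R) := by
  have hA := RelDix.points hhom' hiso' ξ'
  let j : PQuot 𝕜 Ω' ξ' →ₐ[𝕜] PQuot 𝕜 Ω' ξ' ⊗[𝕜] R := Algebra.TensorProduct.includeLeft
  have hj : Function.Injective j :=
    Algebra.TensorProduct.includeLeft_injective (algebraMap 𝕜 R).injective
  have hX : ∀ i, f (RelDix.mkA Ω ξ (MvPolynomial.X i)) ∈ j.range := by
    intro i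
    exact RelDix.scalar_part hR _ fun ν hν =>
      RelDix.tensor_part hA hn hhom hiso hP hPT hf hν i
  have hall : ∀ a, f a ∈ j.range := by
    intro a
    obtain ⟨p, rfl⟩ := RelDix.mkA_surj Ω ξ a
    induction p using MvPolynomial.induction_on with
    | C c =>
      have : RelDix.mkA Ω ξ (MvPolynomial.C c) = algebraMap 𝕜 _ c := (RelDix.mkA Ω ξ).commutes c
      rw [this, f.commutes]
      exact j.range.algebraMap_mem c
    | add p q hp hq => rw [map_add, map_add]; exact add_mem hp hq
    | mul_X p i hp => rw [map_mul, map_mul]; exact mul_mem hp (hX i)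
  obtain ⟨g, hg⟩ := RelDix.factor f j hj hall
  have hgP : IsPoissonHom P P' g := by
    intro a b
    apply hj
    rw [hg, hf, ← hg, ← hg]
    show PT.bracket (g a ⊗ₜ[𝕜] (1 : R)) (g b ⊗ₜ[𝕜] (1 : R)) = P'.bracket (g a) (g b) ⊗ₜ[𝕜] (1 : R)
    rw [hPT, RelDix.bracket_one_right, TensorProduct.tmul_zero, add_zero, mul_one]
  have hginj : Function.Injective g := by
    intro a b hab
    apply hinj
    rw [← hg, ← hg, hab]
  have hgs := RelDix.surj_part hn hhom hhom' hiso hiso' hP hP' hgP hginj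
  ext t
  constructor
  · rintro ⟨a, rfl⟩
    exact ⟨g a, hg a⟩
  · rintro ⟨p, rfl⟩
    obtain ⟨a, rfl⟩ := hgs p
    exact ⟨a, (hg a).symm⟩
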